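/- For every convex body K in ℝⁿ one has the duality formula d_{n,n−1}(K) = |K| · |((K−K)/2)°| / (4ⁿ · δ_L(((K−K)/2)°)). -/

import Mathlib

open MeasureTheory Set Matrix Pointwise

noncomputable section

/-- The lattice `A · ℤⁿ` associated with an (invertible) matrix `A`. -/
def latticeOf {n : ℕ} (A : Matrix (Fin n) (Fin n) ℝ) : Set (Fin n → ℝ) :=
  Set.range fun m : Fin n → ℤ => A.mulVec fun i => (m i : ℝ)

/-- `Λ + K` is non-separable: every affine hyperplane `{y | ⟨u,y⟩ = c}` (with `u ≠ 0`)
meets `x + K` for some `x ∈ Λ`. -/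
def NonSeparable {n : ℕ} (Λ K : Set (Fin n → ℝ)) : Prop :=
  ∀ u : Fin n → ℝ, u ≠ 0 → ∀ c : ℝ, ∃ x ∈ Λ, ∃ y ∈ K, u ⬝ᵥ (x + y) = c

/-- `d_{n,n-1}(K)`: the smallest density `|K|/d(Λ)` of a non-separable
lattice of translates of `K`. -/
def dTrans {n : ℕ} (K : Set (Fin n → ℝ)) : ℝ :=
  sInf {d : ℝ | ∃ A : Matrix (Fin n) (Fin n) ℝ, A.det ≠ 0 ∧
    NonSeparable (latticeOf A) K ∧ d = (volume K).toReal / |A.det|}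

/-- The polar body `K° = {x | ∀ y ∈ K, ⟨y,x⟩ ≤ 1}`. -/
def polarBody {n : ℕ} (K : Set (Fin n → ℝ)) : Set (Fin n → ℝ) :=
  {x | ∀ y ∈ K, y ⬝ᵥ x ≤ 1}

/-- A set `Λ` is `K`-admissible if it meets the interior of `K` only in `0`. -/
def Admissible {n : ℕ} (Λ K : Set (Fin n → ℝ)) : Prop :=
  Λ ∩ interior K = {0}

/-- The critical determinant `Δ(K)`: the smallest determinant of a `K`-admissible lattice. -/
def critDet {n : ℕ} (K : Set (Fin n → ℝ)) : ℝ :=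
  sInf {d : ℝ | ∃ A : Matrix (Fin n) (Fin n) ℝ, A.det ≠ 0 ∧
    Admissible (latticeOf A) K ∧ d = |A.det|}

/-- The densest lattice packing density `δ_L(K) = |K| / (2ⁿ Δ(K))` of a
centrally symmetric convex body `K ⊆ ℝⁿ`. -/
def deltaL {n : ℕ} (K : Set (Fin n → ℝ)) : ℝ :=
  (volume K).toReal / (2 ^ n * critDet K)

/-!
Pairing with `u ≠ 0` sends the lattice `Λ` to a subgroup `G` of `ℝ` and the body `K` to a compact
interval `S`; non-separability says that `G + S = ℝ` for every such `u`. If `G` is dense this holds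
because `S` is nondegenerate, and if `G = pℤ` it holds exactly when `S` has length at least `p`. The
second case occurs exactly when `u` is a multiple of a vector of `2Λ*`, where `Λ*` is the dual
lattice, and after rescaling one may take `p = 2`. On the other hand `u` lies outside the interior
of `((K - K)/2)°` exactly when `S` has length at least `2`. Hence `Λ + K` is non-separable if and
only if `2Λ*` is admissible for `((K - K)/2)°`, and `d(Λ) d(2Λ*) = 2ⁿ` converts one infimum into
the other.
-/

section OrderedGroup

variable {α : Type*} [AddCommGroup α] [LinearOrder α] [IsOrderedAddMonoid α] [TopologicalSpace α]

theorem dense_or_exists_pos_eq_zmultiples [OrderTopology α] [Archimedean α]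
    {G : AddSubgroup α} (hG : G ≠ ⊥) :
    Dense (G : Set α) ∨ ∃ p, 0 < p ∧ G = AddSubgroup.zmultiples p := by
  by_cases hmin : ∃ p, IsLeast {g | g ∈ G ∧ 0 < g} p
  · obtain ⟨p, hp⟩ := hmin
    refine Or.inr ⟨p, hp.1.2, ?_⟩
    rw [AddSubgroup.zmultiples_eq_closure, AddSubgroup.cyclic_of_min hp]
  · exact Or.inl (G.dense_of_no_min hG hmin)

theorem exists_add_le_of_add_eq_univ [OrderClosedTopology α] [DenselyOrdered α]
    {G : AddSubgroup α} {S : Set α} {p : α} (hp : 0 < p) (hG : G ≤ AddSubgroup.zmultiples p)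
    (hS : IsCompact S) (hGS : (G : Set α) + S = univ) :
    ∃ s ∈ S, ∃ t ∈ S, s + p ≤ t := by
  have hne : S.Nonempty := (hGS ▸ univ_nonempty : ((G : Set α) + S).Nonempty).of_add_right
  obtain ⟨a, ha, haS⟩ := hS.exists_isLeast hne
  obtain ⟨b, hb, hbS⟩ := hS.exists_isGreatest hne
  refine ⟨a, ha, b, hb, not_lt.1 fun hlt => ?_⟩
  obtain ⟨c, hbc, hca⟩ := exists_between hlt
  obtain ⟨g, hg, s, hs, rfl⟩ : c ∈ (G : Set α) + S := hGS ▸ mem_univ c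
  obtain ⟨k, rfl⟩ := AddSubgroup.mem_zmultiples_iff.1 (hG hg)
  have hk_pos : (0 : ℤ) • p < k • p := by
    simpa using (hbS hs).trans_lt hbc
  have hk_lt : k • p < (1 : ℤ) • p := by
    have : k • p + s < p + s := hca.trans_le (by rw [add_comm a]; gcongr; exact haS hs)
    simpa using this
  rw [zsmul_lt_zsmul_iff_left hp] at hk_pos hk_lt
  omega

theorem add_eq_univ_of_add_le [OrderClosedTopology α] [Archimedean α]
    {G : AddSubgroup α} {S : Set α} {p s t : α} (hp : 0 < p) (hpG : p ∈ G)
    (hS : IsPreconnected S) (hs : s ∈ S) (ht : t ∈ S) (hst : s + p ≤ t) :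
    (G : Set α) + S = univ := by
  refine eq_univ_of_forall fun c => ?_
  obtain ⟨k, ⟨hsk, hks⟩, -⟩ := existsUnique_sub_zsmul_mem_Ico hp c s
  exact ⟨k • p, zsmul_mem hpG k, c - k • p,
    hS.Icc_subset hs ht ⟨hsk, hks.le.trans hst⟩, add_sub_cancel _ _⟩

end OrderedGroup

section Lattice

variable {n : ℕ} {A : Matrix (Fin n) (Fin n) ℝ}

theorem zero_mem_latticeOf (A : Matrix (Fin n) (Fin n) ℝ) : 0 ∈ latticeOf A :=
  ⟨0, by simp [← Pi.zero_def]⟩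

/-- The subgroup `{⟨u, x⟩ | x ∈ A · ℤⁿ}` of `ℝ`, encoded through its generators, the products of `u`
with the columns of `A`. -/
def latticeValues (A : Matrix (Fin n) (Fin n) ℝ) (u : Fin n → ℝ) : AddSubgroup ℝ :=
  AddSubgroup.closure (range (u ᵥ* A))

theorem coe_latticeValues (A : Matrix (Fin n) (Fin n) ℝ) (u : Fin n → ℝ) :
    (latticeValues A u : Set ℝ) = (u ⬝ᵥ ·) '' latticeOf A := by
  ext c
  simp only [latticeValues, latticeOf, SetLike.mem_coe,
    AddSubgroup.mem_closure_range_iff_of_fintype, ← range_comp, mem_range, Function.comp_apply,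
    dotProduct_mulVec]
  simp only [dotProduct, zsmul_eq_mul, mul_comm, eq_comm]

theorem latticeValues_le_iff {u : Fin n → ℝ} {G : AddSubgroup ℝ} :
    latticeValues A u ≤ G ↔ ∀ i, (u ᵥ* A) i ∈ G := by
  simp only [latticeValues, AddSubgroup.closure_le, range_subset_iff, SetLike.mem_coe]

theorem latticeValues_ne_bot (hA : A.det ≠ 0) {u : Fin n → ℝ} (hu : u ≠ 0) :
    latticeValues A u ≠ ⊥ := by
  refine fun hbot => hu (eq_zero_of_vecMul_eq_zero hA (funext fun i => ?_))
  exact AddSubgroup.mem_bot.1 (latticeValues_le_iff.1 hbot.le i)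

theorem nonSeparable_latticeOf_iff {K : Set (Fin n → ℝ)} :
    NonSeparable (latticeOf A) K ↔
      ∀ u ≠ 0, (latticeValues A u : Set ℝ) + (u ⬝ᵥ ·) '' K = univ := by
  simp only [NonSeparable, coe_latticeValues, eq_univ_iff_forall, mem_add, exists_mem_image,
    dotProduct_add]

/-- A basis matrix of `2Λ*`, where `Λ*` is the lattice dual to `Λ = A · ℤⁿ`. The factor `2` matches
the normalisation `(K - K)/2` of the difference body. Meaningful only for invertible `A`. -/
def doubledDual (A : Matrix (Fin n) (Fin n) ℝ) : Matrix (Fin n) (Fin n) ℝ :=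
  (2 : ℝ) • Aᵀ⁻¹

theorem abs_det_doubledDual (A : Matrix (Fin n) (Fin n) ℝ) :
    |(doubledDual A).det| = 2 ^ n / |A.det| := by
  simp [doubledDual, det_nonsing_inv, Ring.inverse_eq_inv', abs_mul, abs_inv,
    div_eq_mul_inv]

theorem det_doubledDual_ne_zero (hA : A.det ≠ 0) : (doubledDual A).det ≠ 0 := by
  rw [← abs_pos, abs_det_doubledDual]
  positivity

theorem doubledDual_doubledDual (hA : A.det ≠ 0) : doubledDual (doubledDual A) = A := by
  have hinv : ((2 : ℝ) • A⁻¹)⁻¹ = (2⁻¹ : ℝ) • A := by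
    refine inv_eq_left_inv ?_
    rw [smul_mul_smul_comm, mul_nonsing_inv _ hA.isUnit, inv_mul_cancel₀ two_ne_zero, one_smul]
  rw [doubledDual, doubledDual, transpose_smul, transpose_nonsing_inv, transpose_transpose, hinv,
    smul_inv_smul₀ two_ne_zero]

theorem doubledDual_mulVec_eq_iff (hA : A.det ≠ 0) {x w : Fin n → ℝ} :
    doubledDual A *ᵥ x = w ↔ w ᵥ* A = (2 : ℝ) • x := by
  have hA' : IsUnit Aᵀ.det := by rw [det_transpose]; exact hA.isUnit
  rw [doubledDual, smul_mulVec, ← mulVec_smul, ← mulVec_transpose]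
  constructor
  · rintro rfl
    rw [mulVec_mulVec, mul_nonsing_inv _ hA', one_mulVec]
  · intro h
    rw [← h, mulVec_mulVec, nonsing_inv_mul _ hA', one_mulVec]

theorem mem_latticeOf_doubledDual_iff (hA : A.det ≠ 0) {w : Fin n → ℝ} :
    w ∈ latticeOf (doubledDual A) ↔ latticeValues A w ≤ AddSubgroup.zmultiples 2 := by
  simp only [latticeOf, mem_range, doubledDual_mulVec_eq_iff hA, latticeValues_le_iff,
    AddSubgroup.mem_zmultiples_iff, funext_iff, Classical.skolem, Pi.smul_apply, smul_eq_mul,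
    zsmul_eq_mul, mul_comm, eq_comm]

theorem smul_mem_latticeOf_doubledDual (hA : A.det ≠ 0) {u : Fin n → ℝ} {p : ℝ} (hp : p ≠ 0)
    (hu : latticeValues A u ≤ AddSubgroup.zmultiples p) :
    (2 / p) • u ∈ latticeOf (doubledDual A) := by
  rw [mem_latticeOf_doubledDual_iff hA, latticeValues_le_iff]
  intro i
  obtain ⟨k, hk⟩ := AddSubgroup.mem_zmultiples_iff.1 (latticeValues_le_iff.1 hu i)
  refine AddSubgroup.mem_zmultiples_iff.2 ⟨k, ?_⟩
  rw [smul_vecMul, Pi.smul_apply, ← hk]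
  simp only [zsmul_eq_mul, smul_eq_mul]
  field_simp

end Lattice

section Polar

variable {n : ℕ} {C K : Set (Fin n → ℝ)}

theorem mem_interior_polarBody_iff (hC : IsCompact C) {x : Fin n → ℝ} :
    x ∈ interior (polarBody C) ↔ ∀ y ∈ C, y ⬝ᵥ x < 1 := by
  rw [mem_interior_iff_mem_nhds]
  constructor
  · intro hx y hy
    have hdil : ∀ᶠ t in nhds (1 : ℝ), t • x ∈ polarBody C :=
      (by fun_prop : Continuous fun t : ℝ => t • x).continuousAt.eventually_mem (by simpa using hx)
    obtain ⟨t, ht, htx⟩ := ((frequently_gt_nhds (1 : ℝ)).and_eventually hdil).exists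
    have hty : t * (y ⬝ᵥ x) ≤ 1 := by simpa using htx y hy
    by_contra! hle
    nlinarith
  · intro hx
    have hnear : ∀ᶠ z in nhds x, ∀ y ∈ C, y ⬝ᵥ z < 1 :=
      hC.eventually_forall_of_forall_eventually fun y hy =>
        (by fun_prop : Continuous fun q : (Fin n → ℝ) × (Fin n → ℝ) =>
          q.2 ⬝ᵥ q.1).continuousAt.eventually_lt_const (hx y hy)
    exact hnear.mono fun z hz y hy => (hz y hy).le

theorem polarBody_convexHull (C : Set (Fin n → ℝ)) :
    polarBody (convexHull ℝ C) = polarBody C := by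
  refine Subset.antisymm (fun x hx y hy => hx y (subset_convexHull ℝ C hy)) fun x hx => ?_
  exact convexHull_min hx (convex_halfSpace_le (f := (· ⬝ᵥ x))
    ⟨fun y z => add_dotProduct y z x, fun c y => smul_dotProduct c y x⟩ 1)

theorem isBounded_polarBody (hC : C ∈ nhds 0) : Bornology.IsBounded (polarBody C) := by
  obtain ⟨r, hr, hrC⟩ := Metric.nhds_basis_closedBall.mem_iff.1 hC
  refine isBounded_iff_forall_norm_le.2 ⟨1 / r, fun x hx => ?_⟩
  rw [pi_norm_le_iff_of_nonneg (by positivity)]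
  intro i
  have hcoord : ∀ s : ℝ, |s| ≤ r → s * x i ≤ 1 := fun s hs => by
    simpa using hx (Pi.single i s) (hrC (by simpa [Pi.norm_single] using hs))
  have hpos := hcoord r (abs_of_pos hr).le
  have hneg := hcoord (-r) (by simp [abs_of_pos hr])
  rw [Real.norm_eq_abs, le_div_iff₀ hr, ← abs_of_pos hr, ← abs_mul, abs_le]
  constructor <;> linarith

theorem isCompact_half_sub (hK : IsCompact K) : IsCompact ((2⁻¹ : ℝ) • (K - K)) := by
  rw [sub_eq_add_neg]
  exact (hK.add hK.neg).smul _

theorem convexHull_half_sub_mem_nhds_zero (hspan : affineSpan ℝ K = ⊤) :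
    convexHull ℝ ((2⁻¹ : ℝ) • (K - K)) ∈ nhds 0 := by
  obtain ⟨p, hp⟩ := interior_convexHull_nonempty_iff_affineSpan_eq_top.2 hspan
  rw [convexHull_smul, convexHull_sub, set_smul_mem_nhds_zero_iff (by norm_num)]
  exact Filter.mem_of_superset (isOpen_interior.sub_left.mem_nhds ⟨p, hp, p, hp, sub_self p⟩)
    (sub_subset_sub interior_subset interior_subset)

theorem toReal_volume_polarBody_ne_zero (hC : IsCompact C) (hC0 : convexHull ℝ C ∈ nhds 0) :
    (volume (polarBody C)).toReal ≠ 0 := by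
  have hzero : 0 ∈ interior (polarBody C) := (mem_interior_polarBody_iff hC).2 (by simp)
  have hbdd : Bornology.IsBounded (polarBody C) :=
    polarBody_convexHull C ▸ isBounded_polarBody hC0
  exact ENNReal.toReal_ne_zero.2
    ⟨(Measure.measure_pos_of_mem_nhds volume (mem_interior_iff_mem_nhds.1 hzero)).ne',
      hbdd.measure_lt_top.ne⟩

theorem mem_interior_polarBody_half_sub_iff (hK : IsCompact K) {w : Fin n → ℝ} :
    w ∈ interior (polarBody ((2⁻¹ : ℝ) • (K - K))) ↔
      ∀ y ∈ K, ∀ z ∈ K, w ⬝ᵥ z < w ⬝ᵥ y + 2 := by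
  have hwidth : ∀ y z, ((2⁻¹ : ℝ) • (z - y)) ⬝ᵥ w < 1 ↔ w ⬝ᵥ z < w ⬝ᵥ y + 2 := fun y z => by
    rw [smul_dotProduct, dotProduct_comm, dotProduct_sub, smul_eq_mul, inv_mul_lt_iff₀ two_pos,
      mul_one, sub_lt_iff_lt_add']
  rw [mem_interior_polarBody_iff (isCompact_half_sub hK), ← image_smul, forall_mem_image,
    ← image2_sub, forall_mem_image2]
  simp only [hwidth]
  tauto

theorem admissible_polarBody_half_sub_iff (hK : IsCompact K) {Λ : Set (Fin n → ℝ)} (hΛ : 0 ∈ Λ) :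
    Admissible Λ (polarBody ((2⁻¹ : ℝ) • (K - K))) ↔
      ∀ w ∈ Λ, w ≠ 0 → ∃ y ∈ K, ∃ z ∈ K, w ⬝ᵥ y + 2 ≤ w ⬝ᵥ z := by
  have hzero : 0 ∈ interior (polarBody ((2⁻¹ : ℝ) • (K - K))) :=
    (mem_interior_polarBody_half_sub_iff hK).2 (by simp)
  have hsub : {0} ⊆ Λ ∩ interior (polarBody ((2⁻¹ : ℝ) • (K - K))) :=
    singleton_subset_iff.2 ⟨hΛ, hzero⟩
  rw [Admissible, ← hsub.ge_iff_eq']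
  simp only [subset_singleton_iff, mem_inter_iff, and_imp,
    mem_interior_polarBody_half_sub_iff hK]
  refine forall₂_congr fun w _ => ?_
  rw [← not_imp_not]
  push Not
  rfl

end Polar

section Duality

variable {n : ℕ} {A : Matrix (Fin n) (Fin n) ℝ} {K : Set (Fin n → ℝ)}

theorem exists_dotProduct_lt_dotProduct (hspan : affineSpan ℝ K = ⊤) {u : Fin n → ℝ}
    (hu : u ≠ 0) : ∃ y ∈ K, ∃ z ∈ K, u ⬝ᵥ y < u ⬝ᵥ z := by
  by_contra! hle
  have horth : ∀ x ∈ vectorSpan ℝ K, u ⬝ᵥ x = 0 := by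
    intro x hx
    induction hx using Submodule.span_induction with
    | mem x hx =>
      obtain ⟨y, hy, z, hz, rfl⟩ := hx
      exact (dotProduct_sub u y z).trans (sub_eq_zero.2 ((hle z hz y hy).antisymm (hle y hy z hz)))
    | zero => exact dotProduct_zero u
    | add x y _ _ hx hy => rw [dotProduct_add, hx, hy, add_zero]
    | smul c x _ hx => rw [dotProduct_smul, hx, smul_zero]
  have htop : vectorSpan ℝ K = ⊤ :=
    AffineSubspace.vectorSpan_eq_top_of_affineSpan_eq_top _ _ _ hspan
  exact hu (dotProduct_self_eq_zero.1 (horth u (htop ▸ Submodule.mem_top)))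

theorem NonSeparable.admissible_doubledDual (hA : A.det ≠ 0) (hK : IsCompact K)
    (hns : NonSeparable (latticeOf A) K) :
    Admissible (latticeOf (doubledDual A)) (polarBody ((2⁻¹ : ℝ) • (K - K))) := by
  rw [admissible_polarBody_half_sub_iff hK (zero_mem_latticeOf _)]
  intro w hw hw0
  have hvalues := (mem_latticeOf_doubledDual_iff hA).1 hw
  have hcover := nonSeparable_latticeOf_iff.1 hns w hw0
  simpa only [exists_mem_image] using
    exists_add_le_of_add_eq_univ two_pos hvalues (hK.image (by fun_prop)) hcover

theorem Admissible.nonSeparable_of_doubledDual (hA : A.det ≠ 0) (hK : IsCompact K)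
    (hconn : IsPreconnected K) (hspan : affineSpan ℝ K = ⊤)
    (hadm : Admissible (latticeOf (doubledDual A)) (polarBody ((2⁻¹ : ℝ) • (K - K)))) :
    NonSeparable (latticeOf A) K := by
  rw [admissible_polarBody_half_sub_iff hK (zero_mem_latticeOf _)] at hadm
  refine nonSeparable_latticeOf_iff.2 fun u hu => ?_
  suffices hstep : ∃ p ∈ latticeValues A u, 0 < p ∧ ∃ y ∈ K, ∃ z ∈ K, u ⬝ᵥ y + p ≤ u ⬝ᵥ z by
    obtain ⟨p, hpG, hp, y, hy, z, hz, hyz⟩ := hstep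
    exact add_eq_univ_of_add_le hp hpG (hconn.image _ (by fun_prop))
      (mem_image_of_mem _ hy) (mem_image_of_mem _ hz) hyz
  rcases dense_or_exists_pos_eq_zmultiples (latticeValues_ne_bot hA hu) with
    hdense | ⟨p, hp, hcyclic⟩
  · obtain ⟨y, hy, z, hz, hyz⟩ := exists_dotProduct_lt_dotProduct hspan hu
    obtain ⟨p, hpG, hp, hp_lt⟩ := hdense.exists_between (sub_pos.2 hyz)
    exact ⟨p, hpG, hp, y, hy, z, hz, by linarith⟩
  · obtain ⟨y, hy, z, hz, hyz⟩ := hadm _ (smul_mem_latticeOf_doubledDual hA hp.ne' hcyclic.le)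
      (smul_ne_zero (by positivity) hu)
    refine ⟨p, hcyclic ▸ AddSubgroup.mem_zmultiples p, hp, y, hy, z, hz, ?_⟩
    simp only [smul_dotProduct, smul_eq_mul] at hyz
    field_simp at hyz
    linarith

theorem nonSeparable_iff_admissible_doubledDual (hA : A.det ≠ 0) (hK : IsCompact K)
    (hconn : IsPreconnected K) (hspan : affineSpan ℝ K = ⊤) :
    NonSeparable (latticeOf A) K ↔
      Admissible (latticeOf (doubledDual A)) (polarBody ((2⁻¹ : ℝ) • (K - K))) :=
  ⟨NonSeparable.admissible_doubledDual hA hK,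
    Admissible.nonSeparable_of_doubledDual hA hK hconn hspan⟩

theorem dTrans_eq_mul_critDet (hK : IsCompact K) (hconn : IsPreconnected K)
    (hspan : affineSpan ℝ K = ⊤) :
    dTrans K = (volume K).toReal / 2 ^ n * critDet (polarBody ((2⁻¹ : ℝ) • (K - K))) := by
  have hdensity : ∀ A : Matrix (Fin n) (Fin n) ℝ,
      (volume K).toReal / |A.det| = (volume K).toReal / 2 ^ n * |(doubledDual A).det| := fun A => by
    rw [abs_det_doubledDual]
    field_simp
  have hduality {A : Matrix (Fin n) (Fin n) ℝ} (hA : A.det ≠ 0) :=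
    nonSeparable_iff_admissible_doubledDual hA hK hconn hspan
  rw [dTrans, critDet, ← smul_eq_mul, ← Real.sInf_smul_of_nonneg (by positivity)]
  congr 1
  ext d
  simp only [mem_smul_set, mem_ofPred_eq, smul_eq_mul]
  constructor
  · rintro ⟨A, hA, hns, rfl⟩
    exact ⟨_, ⟨doubledDual A, det_doubledDual_ne_zero hA,
      (hduality hA).1 hns, rfl⟩, (hdensity A).symm⟩
  · rintro ⟨_, ⟨B, hB, hadm, rfl⟩, rfl⟩
    have hdual := doubledDual_doubledDual hB
    have hB' := det_doubledDual_ne_zero hB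
    refine ⟨doubledDual B, hB', (hduality hB').2 ?_, ?_⟩
    · rwa [hdual]
    · rw [hdensity, hdual]

theorem volume_div_deltaL {C : Set (Fin n → ℝ)} (hC : (volume C).toReal ≠ 0) :
    (volume C).toReal / deltaL C = 2 ^ n * critDet C :=
  div_div_cancel₀ hC

end Duality

theorem dTrans_duality_general {n : ℕ} (K : Set (Fin n → ℝ))
    (hKc : IsCompact K) (hKconn : IsPreconnected K) (hKspan : affineSpan ℝ K = ⊤) :
    dTrans K = (volume K).toReal * (volume (polarBody ((2⁻¹ : ℝ) • (K - K)))).toReal /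
      (4 ^ n * deltaL (polarBody ((2⁻¹ : ℝ) • (K - K)))) := by
  set P := polarBody ((2⁻¹ : ℝ) • (K - K))
  have hP : (volume P).toReal ≠ 0 :=
    toReal_volume_polarBody_ne_zero (isCompact_half_sub hKc)
      (convexHull_half_sub_mem_nhds_zero hKspan)
  have h4 : (4 : ℝ) ^ n = 2 ^ n * 2 ^ n := by rw [← mul_pow]; norm_num
  calc dTrans K = (volume K).toReal / 2 ^ n * critDet P :=
        dTrans_eq_mul_critDet hKc hKconn hKspan
    _ = (volume K).toReal / 4 ^ n * (2 ^ n * critDet P) := by rw [h4]; field_simp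
    _ = (volume K).toReal / 4 ^ n * ((volume P).toReal / deltaL P) := by rw [volume_div_deltaL hP]
    _ = (volume K).toReal * (volume P).toReal / (4 ^ n * deltaL P) := div_mul_div_comm _ _ _ _

/-- Duality: for every convex body `K ⊆ ℝⁿ`,
`d_{n,n-1}(K) = |K| · |((K-K)/2)°| / (4ⁿ · δ_L(((K-K)/2)°))`. -/
theorem dTrans_duality {n : ℕ} (K : Set (Fin n → ℝ))
    (hKc : IsCompact K) (hKconv : Convex ℝ K) (hKint : (interior K).Nonempty) :
    dTrans K = (volume K).toReal * (volume (polarBody ((2⁻¹ : ℝ) • (K - K)))).toReal /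
      (4 ^ n * deltaL (polarBody ((2⁻¹ : ℝ) • (K - K)))) :=
  dTrans_duality_general K hKc hKconv.isPreconnected
    (affineSpan_eq_top_of_nonempty_interior (hKconv.convexHull_eq.symm ▸ hKint))
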